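/- Let k be a number field and S a finite set of places containing the archimedean places, a, b, c ∈ k^*. Then the set of pairs (u, v) ∈ O_{k,S}^* × O_{k,S}^* satisfying au + bv = c is finite. -/

import Mathlib

open IsDedekindDomain NumberField

namespace SUnit

lemma beta_nat (b : ℕ) : ∀ a : ℕ, ∫ t in (0:ℝ)..1, t ^ a * (1 - t) ^ b =
    (a.factorial * b.factorial : ℝ) / (a + b + 1).factorial := by
  induction b with
  | zero =>
    intro a
    simp [integral_pow, Nat.factorial_succ]
    have := Nat.factorial_pos a
    field_simp
  | succ b ih =>
    intro a
    have h1 : ∫ t in (0:ℝ)..1, ((a + 1 : ℝ) * (t ^ a * (1 - t) ^ (b + 1)) -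
        (b + 1 : ℝ) * (t ^ (a + 1) * (1 - t) ^ b)) = 0 := by
      have := intervalIntegral.integral_eq_sub_of_hasDerivAt
        (f := fun t : ℝ => t ^ (a + 1) * (1 - t) ^ (b + 1))
        (f' := fun t : ℝ => ((a + 1 : ℝ) * (t ^ a * (1 - t) ^ (b + 1)) -
        (b + 1 : ℝ) * (t ^ (a + 1) * (1 - t) ^ b))) (a := 0) (b := 1) ?_ ?_
      · rw [this]; simp
      · intro t _
        have e1 : HasDerivAt (fun t : ℝ => t ^ (a + 1)) ((a + 1 : ℝ) * t ^ a) t := by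
          simpa using hasDerivAt_pow (a + 1) t
        have e2 : HasDerivAt (fun t : ℝ => (1 - t) ^ (b + 1))
            (((b + 1 : ℕ) : ℝ) * (1 - t) ^ b * (-1)) t := by
          simpa using ((hasDerivAt_id t).const_sub 1).fun_pow (b + 1)
        refine (e1.fun_mul e2).congr_deriv ?_
        push_cast
        ring
      · apply Continuous.intervalIntegrable
        fun_prop
    rw [intervalIntegral.integral_sub, intervalIntegral.integral_const_mul,
      intervalIntegral.integral_const_mul, ih] at h1
    · have e : a + 1 + b + 1 = a + (b + 1) + 1 := by ring
      rw [e] at h1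
      have p1 : (0:ℝ) < (a + (b + 1) + 1).factorial := by
        exact_mod_cast Nat.factorial_pos _
      have p2 : (0:ℝ) < a + 1 := by positivity
      rw [Nat.factorial_succ a] at h1
      rw [Nat.factorial_succ b]
      apply mul_left_cancel₀ p2.ne'
      rw [sub_eq_zero] at h1
      rw [h1]
      push_cast
      field_simp
    all_goals
      apply Continuous.intervalIntegrable
      fun_prop

/-- Coefficients of the Padé polynomials. -/
def coef (a b c i : ℕ) : ℤ := (-1) ^ i * ((a + i).choose i * (a + b + c + 1).choose (c - i) : ℕ)

/-- The homogeneous Padé polynomials. -/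
def G {R : Type*} [CommRing R] (a b c : ℕ) (y w : R) : R :=
  ∑ i ∈ Finset.range (c + 1), (coef a b c i : R) * (w ^ i * y ^ (c - i))

lemma map_G {R S : Type*} [CommRing R] [CommRing S] (f : R →+* S) (a b c : ℕ) (y w : R) :
    f (G a b c y w) = G a b c (f y) (f w) := by
  simp [G, map_sum]

/-- normalising factor -/
noncomputable def F (a b c : ℕ) : ℝ :=
  (a + b + c + 1).factorial / (a.factorial * b.factorial * c.factorial)

lemma coef_eq (a b c i : ℕ) (h : i ≤ c) : (coef a b c i : ℝ) =
    F a b c * ((-1) ^ i * c.choose i *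
      (((a + i).factorial * b.factorial : ℝ) / (a + i + b + 1).factorial)) := by
  obtain ⟨j, rfl⟩ := Nat.exists_eq_add_of_le h
  have e : a + b + (i + j) + 1 = (a + i + b + 1) + j := by ring
  rw [coef, F, Nat.add_sub_cancel_left, e]
  push_cast
  rw [Nat.cast_choose ℝ (Nat.le_add_left i a), Nat.cast_choose ℝ (Nat.le_add_left j _),
    Nat.cast_choose ℝ (Nat.le_add_right i j)]
  simp only [Nat.add_sub_cancel, Nat.add_sub_cancel_left]
  have := fun n : ℕ => (Nat.cast_ne_zero (R := ℝ)).2 (Nat.factorial_ne_zero n)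
  field_simp [this]

lemma G_integral (a b c : ℕ) (y w : ℝ) :
    G a b c y w = F a b c * ∫ s in (0:ℝ)..1, s ^ a * (1 - s) ^ b * (y - w * s) ^ c := by
  have h : ∀ s : ℝ, s ^ a * (1 - s) ^ b * (y - w * s) ^ c =
      ∑ i ∈ Finset.range (c + 1), ((-1) ^ i * c.choose i * (w ^ i * y ^ (c - i))) *
        (s ^ (a + i) * (1 - s) ^ b) := by
    intro s
    rw [show y - w * s = -(w * s) + y by ring, add_pow, Finset.mul_sum]
    apply Finset.sum_congr rfl
    intro i _
    rw [neg_pow, mul_pow, pow_add]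
    ring
  simp_rw [h]
  rw [intervalIntegral.integral_finsetSum]
  · rw [G, Finset.mul_sum]
    apply Finset.sum_congr rfl
    intro i hi
    rw [intervalIntegral.integral_const_mul, beta_nat, coef_eq a b c i (by
      have := Finset.mem_range.1 hi; omega)]
    ring
  · intro i _
    apply Continuous.intervalIntegrable
    fun_prop

lemma pade_real (a b c : ℕ) (z : ℝ) :
    z ^ (a + c + 1) * G a c b 1 z + (-1) ^ c * (1 - z) ^ (b + c + 1) * G b c a 1 (1 - z) =
      G a b c z 1 := by
  have hF1 : F a c b = F a b c := by
    simp only [F]; rw [show a + c + b + 1 = a + b + c + 1 by ring]; congr 1; ring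
  have hF2 : F b c a = F a b c := by
    simp only [F]; rw [show b + c + a + 1 = a + b + c + 1 by ring]; congr 1; ring
  rw [G_integral, G_integral, G_integral, hF1, hF2]
  set f : ℝ → ℝ := fun s => s ^ a * (1 - s) ^ b * (z - 1 * s) ^ c with hf
  have hc : Continuous f := by fun_prop
  have h1 : z ^ (a + c + 1) * ∫ s in (0:ℝ)..1, s ^ a * (1 - s) ^ c * (1 - z * s) ^ b =
      ∫ s in (0:ℝ)..z, f s := by
    have := intervalIntegral.mul_integral_comp_mul_left (a := 0) (b := 1) (f := f) z
    rw [mul_zero, mul_one] at this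
    rw [← this, pow_succ', mul_assoc, ← intervalIntegral.integral_const_mul]
    congr 1
    apply intervalIntegral.integral_congr
    intro s _
    simp only [hf]
    rw [show z - 1 * (z * s) = z * (1 - s) by ring, mul_pow, mul_pow, pow_add]
    ring
  have h2 : (-1) ^ c * (1 - z) ^ (b + c + 1) *
      ∫ s in (0:ℝ)..1, s ^ b * (1 - s) ^ c * (1 - (1 - z) * s) ^ a = ∫ s in z..1, f s := by
    have := intervalIntegral.mul_integral_comp_sub_mul (a := 0) (b := 1) (f := f) (1 - z) 1
    rw [mul_zero, mul_one, sub_zero, sub_sub_cancel] at this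
    rw [← this, pow_succ', mul_left_comm, mul_assoc, mul_assoc, ← mul_assoc ((-1) ^ c),
      ← intervalIntegral.integral_const_mul]
    congr 1
    apply intervalIntegral.integral_congr
    intro s _
    simp only [hf]
    rw [show z - 1 * (1 - (1 - z) * s) = (-1) * ((1 - z) * (1 - s)) by ring,
      show 1 - (1 - (1 - z) * s) = (1 - z) * s by ring, mul_pow, mul_pow, mul_pow, pow_add]
    ring
  have h3 := intervalIntegral.integral_add_adjacent_intervals
    (hc.intervalIntegrable (μ := MeasureTheory.volume) 0 z) (hc.intervalIntegrable z 1)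
  rw [← h3, ← h1, ← h2]
  ring

open Polynomial in
lemma pade_poly (a b c : ℕ) :
    (X : ℤ[X]) ^ (a + c + 1) * G a c b 1 X + (-1) ^ c * (1 - X) ^ (b + c + 1) * G b c a 1 (1 - X) =
      G a b c X 1 := by
  apply Polynomial.map_injective (Int.castRingHom ℝ) Int.cast_injective
  apply Polynomial.funext
  intro r
  have := pade_real a b c r
  rw [eval_map, eval_map, ← coe_eval₂RingHom]
  simp only [map_add, map_mul, map_sub, map_pow, map_one, map_neg, map_G]
  simpa using this

lemma pade {R : Type*} [CommRing R] (a b c : ℕ) (z : R) :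
    z ^ (a + c + 1) * G a c b 1 z + (-1) ^ c * (1 - z) ^ (b + c + 1) * G b c a 1 (1 - z) =
      G a b c z 1 := by
  have := congrArg (Polynomial.eval₂RingHom (Int.castRingHom R) z) (pade_poly a b c)
  simp only [map_add, map_mul, map_sub, map_pow, map_one, map_neg, map_G] at this
  simpa using this

open Polynomial in
lemma natDegree_G (a b c : ℕ) (y w : ℤ[X]) (hy : y.natDegree ≤ 1) (hw : w.natDegree = 0) :
    (G a b c y w).natDegree ≤ c := by
  apply natDegree_sum_le_of_forall_le
  intro i _
  refine (natDegree_mul_le).trans ?_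
  refine (Nat.add_le_add (natDegree_intCast _).le natDegree_mul_le).trans ?_
  have h1 : (w ^ i).natDegree ≤ i * 0 := natDegree_pow_le_of_le i hw.le
  have h2 : (y ^ (c - i)).natDegree ≤ (c - i) * 1 := natDegree_pow_le_of_le _ hy
  omega

open Polynomial in
lemma natDegree_G' (a b c : ℕ) (y w : ℤ[X]) (hy : y.natDegree = 0) (hw : w.natDegree ≤ 1) :
    (G a b c y w).natDegree ≤ c := by
  apply natDegree_sum_le_of_forall_le
  intro i hi
  refine (natDegree_mul_le).trans ?_
  refine (Nat.add_le_add (natDegree_intCast _).le natDegree_mul_le).trans ?_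
  have h1 : (w ^ i).natDegree ≤ i * 1 := natDegree_pow_le_of_le i hw
  have h2 : (y ^ (c - i)).natDegree ≤ (c - i) * 0 := natDegree_pow_le_of_le _ hy.le
  have := Finset.mem_range.1 hi
  omega

lemma G_zero_right (a b c : ℕ) : G a b c (1:ℤ) 0 = (a + b + c + 1).choose c := by
  rw [G, Finset.sum_eq_single 0]
  · simp [coef]
  · intro i _ hi; simp [hi]
  · simp

lemma G_zero_left (a b c : ℕ) : G a b c (0:ℤ) 1 = (-1) ^ c * (a + c).choose c := by
  rw [G, Finset.sum_eq_single c]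
  · simp [coef]
  · intro i hi hi'
    have : c - i ≠ 0 := by have := Finset.mem_range.1 hi; omega
    simp [this]
  · simp

open Polynomial in
lemma det_poly (n : ℕ) : ∃ κ : ℤ, κ ≠ 0 ∧
    G (n+1) n (n+1) 1 (X : ℤ[X]) * ((-1) ^ (n+1) * G n (n+1) n 1 (1 - X)) -
      G n (n+1) n 1 X * ((-1) ^ n * G (n+1) n (n+1) 1 (1 - X)) = C κ := by
  have p1 := pade_poly (n+1) (n+1) n
  have p2 := pade_poly n n (n+1)
  rw [show n + (n + 1) + 1 = n + 1 + n + 1 by ring] at p2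
  set A1 := G (n+1) n (n+1) 1 (X : ℤ[X]) with hA1
  set A2 := G n (n+1) n 1 (X : ℤ[X]) with hA2
  set B1 := G (n+1) n (n+1) 1 (1 - X : ℤ[X])
  set B2 := G n (n+1) n 1 (1 - X : ℤ[X])
  set C1 := G (n+1) (n+1) n (X : ℤ[X]) 1 with hC1
  set C2 := G n n (n+1) (X : ℤ[X]) 1 with hC2
  set D := A1 * ((-1) ^ (n+1) * B2) - A2 * ((-1) ^ n * B1) with hD
  have key : D * (1 - X) ^ (n + 1 + n + 1) = A1 * C2 - A2 * C1 := by
    rw [← p1, ← p2, hD]; ring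
  have hX : ((1 - X : ℤ[X])).natDegree = 1 := by
    rw [show (1 - X : ℤ[X]) = -(X - C 1) by simp, natDegree_neg, natDegree_X_sub_C]
  have dA1 : A1.natDegree ≤ n + 1 := natDegree_G' _ _ _ _ _ (by simp) (by simp)
  have dA2 : A2.natDegree ≤ n := natDegree_G' _ _ _ _ _ (by simp) (by simp)
  have dC1 : C1.natDegree ≤ n := natDegree_G _ _ _ _ _ (by simp) (by simp)
  have dC2 : C2.natDegree ≤ n + 1 := natDegree_G _ _ _ _ _ (by simp) (by simp)
  have h0 : D.eval 0 ≠ 0 := by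
    have := congrArg (Polynomial.evalRingHom (0:ℤ)) key
    simp only [map_mul, map_sub, map_pow, map_one, hA1, hA2, hC1, hC2, map_G] at this
    simp only [coe_evalRingHom, eval_X, G_zero_right, G_zero_left, sub_zero, one_pow,
      mul_one] at this
    rw [this]
    have q1 : (0:ℤ) < (n + 1 + n + (n+1) + 1).choose (n+1) := by
      exact_mod_cast Nat.choose_pos (by omega)
    have q2 : (0:ℤ) < (n + (n+1)).choose (n+1) := by
      exact_mod_cast Nat.choose_pos (by omega)
    have q3 : (0:ℤ) < (n + (n+1) + n + 1).choose n := by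
      exact_mod_cast Nat.choose_pos (by omega)
    have q4 : (0:ℤ) < (n + 1 + n).choose n := by
      exact_mod_cast Nat.choose_pos (by omega)
    have := mul_pos q1 q2
    have := mul_pos q3 q4
    rcases neg_one_pow_eq_or ℤ n with h | h <;> rw [pow_succ, h] <;> nlinarith
  refine ⟨D.eval 0, h0, ?_⟩
  have hD0 : D ≠ 0 := by rintro h; rw [h] at h0; simp at h0
  have hX0 : (1 - X : ℤ[X]) ≠ 0 := by intro h; rw [h] at hX; simp at hX
  have hdeg : D.natDegree = 0 := by
    have e := congrArg natDegree key
    rw [natDegree_mul hD0 (pow_ne_zero _ hX0), natDegree_pow, hX] at e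
    have : (A1 * C2 - A2 * C1).natDegree ≤ n + 1 + n + 1 := by
      refine (natDegree_sub_le _ _).trans (max_le ?_ ?_)
      · refine natDegree_mul_le.trans ?_; omega
      · refine natDegree_mul_le.trans ?_; omega
    omega
  rw [eq_C_of_natDegree_eq_zero hdeg]
  simp

lemma det_ne {K : Type*} [Field K] [CharZero K] (n : ℕ) (z : K) :
    G (n+1) n (n+1) 1 z * ((-1) ^ (n+1) * G n (n+1) n 1 (1 - z)) -
      G n (n+1) n 1 z * ((-1) ^ n * G (n+1) n (n+1) 1 (1 - z)) ≠ 0 := by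
  obtain ⟨κ, hκ, h⟩ := det_poly n
  have := congrArg (Polynomial.eval₂RingHom (Int.castRingHom K) z) h
  simp only [map_mul, map_sub, map_pow, map_one, map_neg, map_G] at this
  simp only [Polynomial.coe_eval₂RingHom, Polynomial.eval₂_X, Polynomial.eval₂_C] at this
  rw [this]
  simpa using hκ

end SUnit

namespace SUnit

lemma abv_nat {K : Type*} [Field K] (v : AbsoluteValue K ℝ) (n : ℕ) : v (n : K) ≤ n := by
  induction n with
  | zero => simp
  | succ n ih =>
    push_cast
    refine (v.add_le _ _).trans ?_
    rw [v.map_one]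
    linarith

lemma abv_coef {K : Type*} [Field K] (v : AbsoluteValue K ℝ) (a b c i : ℕ) (hi : i ≤ c) :
    v ((coef a b c i : ℤ) : K) ≤ 2 ^ (a + c) * 2 ^ (a + b + c + 1) := by
  rw [coef]
  have h1 : v ((((-1) ^ i * (((a + i).choose i * (a + b + c + 1).choose (c - i) : ℕ) : ℤ)) : ℤ) : K)
      = v ((((a + i).choose i * (a + b + c + 1).choose (c - i) : ℕ)) : K) := by
    rcases neg_one_pow_eq_or ℤ i with h | h <;> rw [h] <;> simp
  rw [h1]
  refine (abv_nat v _).trans ?_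
  have h2 : (a + i).choose i ≤ 2 ^ (a + c) :=
    (Nat.choose_le_two_pow _ _).trans (Nat.pow_le_pow_right (by norm_num) (by omega))
  have h3 : (a + b + c + 1).choose (c - i) ≤ 2 ^ (a + b + c + 1) := Nat.choose_le_two_pow _ _
  exact_mod_cast Nat.mul_le_mul h2 h3

lemma abv_G {K : Type*} [Field K] (v : AbsoluteValue K ℝ) (a b c N : ℕ) (y w : K) (μ : ℝ)
    (hμ : 1 ≤ μ) (hy : v y ≤ μ) (hw : v w ≤ μ) (hc : c ≤ N)
    (hN : c + (a + c) + (a + b + c + 1) ≤ 6 * N) :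
    v (G a b c y w) ≤ 64 ^ N * μ ^ N := by
  have h1 : v (G a b c y w) ≤ ∑ i ∈ Finset.range (c + 1),
      (2 ^ (a + c) * 2 ^ (a + b + c + 1) : ℝ) * μ ^ c := by
    refine (v.sum_le _ _).trans (Finset.sum_le_sum ?_)
    intro i hi
    have hi' : i ≤ c := by have := Finset.mem_range.1 hi; omega
    rw [v.map_mul, v.map_mul, v.map_pow, v.map_pow]
    have e : μ ^ c = μ ^ i * μ ^ (c - i) := by rw [← pow_add]; congr 1; omega
    rw [e]
    have := v.nonneg y
    have := v.nonneg w
    have := abv_coef v a b c i hi'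
    gcongr
  refine h1.trans ?_
  rw [Finset.sum_const, Finset.card_range, nsmul_eq_mul]
  have h2 : ((c + 1 : ℕ) : ℝ) ≤ 2 ^ c := by
    exact_mod_cast Nat.succ_le_of_lt Nat.lt_two_pow_self
  have h3 : μ ^ c ≤ μ ^ N := pow_le_pow_right₀ hμ hc
  calc ((c + 1 : ℕ) : ℝ) * ((2 ^ (a + c) * 2 ^ (a + b + c + 1) : ℝ) * μ ^ c)
      ≤ 2 ^ c * ((2 ^ (a + c) * 2 ^ (a + b + c + 1) : ℝ) * μ ^ N) := by gcongr
    _ = 2 ^ (c + (a + c) + (a + b + c + 1)) * μ ^ N := by rw [pow_add _ _ (a + b + c + 1), pow_add _ c]; ring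
    _ ≤ 2 ^ (6 * N) * μ ^ N := by
        gcongr
        norm_num
    _ = 64 ^ N * μ ^ N := by rw [pow_mul]; norm_num

lemma G_mem {K : Type*} [Field K] (R : Subring K) (a b c : ℕ) (y w : K) (hy : y ∈ R) (hw : w ∈ R) :
    G a b c y w ∈ R :=
  R.sum_mem fun _ _ => R.mul_mem (intCast_mem R _) (R.mul_mem (R.pow_mem hw _) (R.pow_mem hy _))

lemma exists_triple {K : Type*} [Field K] [CharZero K] (R : Subring K) (n : ℕ) (x ξ η : K)
    (hx : x ∈ R) :
    ∃ A B C : K, A ∈ R ∧ B ∈ R ∧ C ∈ R ∧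
      A * x ^ (2 * (n + 1)) + B * (1 - x) ^ (2 * (n + 1)) = C ∧
      ¬ (A = ξ * C ∧ B = η * C) ∧
      ∀ v : AbsoluteValue K ℝ, ∀ μ : ℝ, 1 ≤ μ → v x ≤ μ → v (1 - x) ≤ μ →
        v A ≤ 64 ^ (n + 1) * μ ^ (n + 1) ∧ v B ≤ 64 ^ (n + 1) * μ ^ (n + 1) ∧
        v C ≤ 64 ^ (n + 1) * μ ^ (n + 1) := by
  have hx' : 1 - x ∈ R := R.sub_mem R.one_mem hx
  have hs : ∀ j : ℕ, (-1 : K) ^ j ∈ R := fun j => R.pow_mem (R.neg_mem R.one_mem) j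
  have hv : ∀ (v : AbsoluteValue K ℝ) (j : ℕ) (z : K), v ((-1) ^ j * z) = v z := by
    intro v j z
    rcases neg_one_pow_eq_or K j with h | h <;> rw [h] <;> simp
  have p1 := pade (n+1) (n+1) n x
  have p2 := pade n n (n+1) x
  rw [show n + 1 + n + 1 = 2 * (n + 1) by ring] at p1
  rw [show n + (n + 1) + 1 = 2 * (n + 1) by ring] at p2
  by_cases h : G (n+1) n (n+1) 1 x = ξ * G (n+1) (n+1) n x 1 ∧
      (-1) ^ n * G (n+1) n (n+1) 1 (1 - x) = η * G (n+1) (n+1) n x 1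
  · refine ⟨G n (n+1) n 1 x, (-1) ^ (n+1) * G n (n+1) n 1 (1 - x), G n n (n+1) x 1,
      G_mem R _ _ _ _ _ R.one_mem hx, R.mul_mem (hs _) (G_mem R _ _ _ _ _ R.one_mem hx'),
      G_mem R _ _ _ _ _ hx R.one_mem, ?_, ?_, ?_⟩
    · rw [← p2]; ring
    · rintro ⟨h1, h2⟩
      apply det_ne n x
      rw [h.1, h.2, h1, h2]
      ring
    · intro v μ hμ h1 h2
      rw [hv]
      refine ⟨abv_G v _ _ _ _ _ _ _ hμ (by simpa using hμ) h1 (by omega) (by omega),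
        abv_G v _ _ _ _ _ _ _ hμ (by simpa using hμ) h2 (by omega) (by omega),
        abv_G v _ _ _ _ _ _ _ hμ h1 (by simpa using hμ) (by omega) (by omega)⟩
  · refine ⟨G (n+1) n (n+1) 1 x, (-1) ^ n * G (n+1) n (n+1) 1 (1 - x), G (n+1) (n+1) n x 1,
      G_mem R _ _ _ _ _ R.one_mem hx, R.mul_mem (hs _) (G_mem R _ _ _ _ _ R.one_mem hx'),
      G_mem R _ _ _ _ _ hx R.one_mem, ?_, h, ?_⟩
    · rw [← p1]; ring
    · intro v μ hμ h1 h2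
      rw [hv]
      refine ⟨abv_G v _ _ _ _ _ _ _ hμ (by simpa using hμ) h1 (by omega) (by omega),
        abv_G v _ _ _ _ _ _ _ hμ (by simpa using hμ) h2 (by omega) (by omega),
        abv_G v _ _ _ _ _ _ _ hμ h1 (by simpa using hμ) (by omega) (by omega)⟩

lemma log_max3 {a b : ℝ} (ha : 0 < a) (hb : 0 < b) :
    Real.log (max (max a b) 1) = max (max (Real.log a) (Real.log b)) 0 := by
  have h := Real.strictMonoOn_log.monotoneOn
  rw [h.map_max (Set.mem_Ioi.2 (lt_max_of_lt_left ha)) (Set.mem_Ioi.2 one_pos),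
    h.map_max (Set.mem_Ioi.2 ha) (Set.mem_Ioi.2 hb), Real.log_one]

lemma place_bound {K : Type*} [Field K] (v : AbsoluteValue K ℝ) (N M : ℕ) (x y ξ η A B C : K)
    (hx : x ≠ 0) (hy : y ≠ 0) (hξ : ξ ≠ 0) (hη : η ≠ 0)
    (h1 : ξ * x ^ M + η * y ^ M = 1) (h2 : A * x ^ M + B * y ^ M = C)
    (hl : ξ * B - η * A ≠ 0) (T : ℝ)
    (hT : ∀ μ : ℝ, 1 ≤ μ → v x ≤ μ → v y ≤ μ →
        v A ≤ T ^ N * μ ^ N ∧ v B ≤ T ^ N * μ ^ N ∧ v C ≤ T ^ N * μ ^ N) (hT0 : 0 < T) :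
    Real.log (v (ξ * B - η * A)) + M * max (max (Real.log (v x)) (Real.log (v y))) 0 ≤
      Real.log 2 + max (max (Real.log (v ξ)) (Real.log (v η))) 0 +
        (N * Real.log T + N * max (max (Real.log (v x)) (Real.log (v y))) 0) := by
  rw [← log_max3 (v.pos hx) (v.pos hy), ← log_max3 (v.pos hξ) (v.pos hη)]
  set μ := max (max (v x) (v y)) 1 with hμ
  set ν := max (max (v ξ) (v η)) 1 with hν
  have hμ1 : 1 ≤ μ := le_max_right _ _
  have hν1 : 1 ≤ ν := le_max_right _ _
  have hξν : v ξ ≤ ν := (le_max_left _ _).trans (le_max_left _ _)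
  have hην : v η ≤ ν := (le_max_right _ _).trans (le_max_left _ _)
  obtain ⟨hA, hB, hC⟩ := hT μ hμ1 ((le_max_left _ _).trans (le_max_left _ _))
    ((le_max_right _ _).trans (le_max_left _ _))
  set Q := T ^ N * μ ^ N with hQ
  have hQ0 : 0 < Q := by positivity
  have hl0 := v.pos hl
  set l := ξ * B - η * A with hldef
  have e1 : l * x ^ M = B - η * C := by linear_combination B * h1 - η * h2
  have e2 : l * y ^ M = ξ * C - A := by linear_combination (-A) * h1 + ξ * h2
  have sub_le : ∀ p q : K, v (p - q) ≤ v p + v q := by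
    intro p q
    have := v.add_le p (-q)
    rwa [← sub_eq_add_neg, v.map_neg] at this
  have gen : ∀ p q r s : K, v p ≤ ν → v r ≤ ν → v q ≤ Q → v s ≤ Q →
      v (p * q - r * s) ≤ 2 * ν * Q := by
    intro p q r s hp hr hq hs
    refine (sub_le _ _).trans ?_
    rw [v.map_mul, v.map_mul]
    have := v.nonneg p
    have := v.nonneg q
    have := v.nonneg r
    have := v.nonneg s
    have : v p * v q ≤ ν * Q := by gcongr
    have : v r * v s ≤ ν * Q := by gcongr
    linarith
  have v1 : v 1 ≤ ν := by simpa using hν1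
  have main : v l * μ ^ M ≤ 2 * ν * Q := by
    have cases : μ = v x ∨ μ = v y ∨ μ = 1 := by
      rcases max_choice (max (v x) (v y)) 1 with h | h
      · rcases max_choice (v x) (v y) with h' | h'
        · left; rw [hμ, h, h']
        · right; left; rw [hμ, h, h']
      · right; right; rw [hμ, h]
    rcases cases with h | h | h
    · rw [h, ← v.map_pow, ← v.map_mul, e1]
      simpa using gen 1 B η C v1 hην hB hC
    · rw [h, ← v.map_pow, ← v.map_mul, e2]
      simpa using gen ξ C 1 A hξν v1 hC hA
    · rw [h, one_pow, mul_one]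
      exact gen ξ B η A hξν hην hB hA
  have hlog := Real.log_le_log (by positivity) main
  have hμ0 : 0 < μ := by positivity
  have hν0 : 0 < ν := by positivity
  rw [Real.log_mul hl0.ne' (by positivity), Real.log_pow, Real.log_mul (by positivity) hQ0.ne',
    Real.log_mul (by norm_num) hν0.ne', hQ, Real.log_mul (by positivity) (by positivity),
    Real.log_pow, Real.log_pow] at hlog
  exact hlog

/-- height of a pair of log vectors -/
noncomputable def H {ι : Type*} [Fintype ι] (p q : ι → ℝ) : ℝ := ∑ i, max (max (p i) (q i)) 0

lemma key {K ι : Type*} [Field K] [CharZero K] [Fintype ι] (v : ι → AbsoluteValue K ℝ)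
    (R : Subring K) (hprod : ∀ r ∈ R, r ≠ 0 → 1 ≤ ∏ i, v i r) (x x' : K)
    (hx0 : x ≠ 0) (hy0 : 1 - x ≠ 0) (hx0' : x' ≠ 0) (hy0' : 1 - x' ≠ 0)
    (hx : x ∈ R) (hxi : x⁻¹ ∈ R) (hyi : (1 - x)⁻¹ ∈ R) (hx' : x' ∈ R) (n : ℕ) :
    (n + 1 : ℝ) * H (fun i => Real.log (v i x)) (fun i => Real.log (v i (1 - x))) ≤
      H (fun i => Real.log (v i x') - 2 * (n + 1) * Real.log (v i x))
        (fun i => Real.log (v i (1 - x')) - 2 * (n + 1) * Real.log (v i (1 - x))) +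
      Fintype.card ι * (Real.log 2 + (n + 1) * Real.log 64) := by
  set M := 2 * (n + 1) with hM
  set ξ := x' * (x⁻¹) ^ M with hξ
  set η := (1 - x') * ((1 - x)⁻¹) ^ M with hη
  have hξ0 : ξ ≠ 0 := mul_ne_zero hx0' (pow_ne_zero _ (inv_ne_zero hx0))
  have hη0 : η ≠ 0 := mul_ne_zero hy0' (pow_ne_zero _ (inv_ne_zero hy0))
  have hξR : ξ ∈ R := R.mul_mem hx' (R.pow_mem hxi _)
  have hηR : η ∈ R := R.mul_mem (R.sub_mem R.one_mem hx') (R.pow_mem hyi _)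
  obtain ⟨A, B, C, hA, hB, hC, hABC, hne, hT⟩ := exists_triple R n x ξ η hx
  have h1 : ξ * x ^ M + η * (1 - x) ^ M = 1 := by
    rw [hξ, hη, inv_pow, inv_pow, inv_mul_cancel_right₀ (pow_ne_zero _ hx0),
      inv_mul_cancel_right₀ (pow_ne_zero _ hy0)]
    ring
  have hl : ξ * B - η * A ≠ 0 := by
    intro h
    apply hne
    constructor
    · linear_combination (-A) * h1 + ξ * hABC - (1 - x) ^ M * h
    · linear_combination (-B) * h1 + η * hABC + x ^ M * h
  have hlR : ξ * B - η * A ∈ R := R.sub_mem (R.mul_mem hξR hB) (R.mul_mem hηR hA)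
  have hsum : 0 ≤ ∑ i, Real.log (v i (ξ * B - η * A)) := by
    rw [← Real.log_prod (fun i _ => ((v i).pos hl).ne')]
    exact Real.log_nonneg (hprod _ hlR hl)
  have hplace := Finset.sum_le_sum (s := Finset.univ) (fun (i : ι) _ =>
    place_bound (v i) (n + 1) M x (1 - x) ξ η A B C hx0 hy0 hξ0 hη0 h1 hABC hl 64
      (hT (v i)) (by norm_num))
  have logξ : ∀ i, Real.log (v i ξ) = Real.log (v i x') - 2 * (n + 1) * Real.log (v i x) := by
    intro i
    rw [hξ, (v i).map_mul, (v i).map_pow, map_inv₀, Real.log_mul ((v i).pos hx0').ne'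
      (pow_ne_zero _ (inv_ne_zero ((v i).pos hx0).ne')), Real.log_pow, Real.log_inv, hM]
    push_cast
    ring
  have logη : ∀ i, Real.log (v i η) =
      Real.log (v i (1 - x')) - 2 * (n + 1) * Real.log (v i (1 - x)) := by
    intro i
    rw [hη, (v i).map_mul, (v i).map_pow, map_inv₀, Real.log_mul ((v i).pos hy0').ne'
      (pow_ne_zero _ (inv_ne_zero ((v i).pos hy0).ne')), Real.log_pow, Real.log_inv, hM]
    push_cast
    ring
  simp only [logξ, logη, Finset.sum_add_distrib, ← Finset.mul_sum, Finset.sum_const,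
    Finset.card_univ, nsmul_eq_mul] at hplace
  rw [hM] at hplace
  push_cast at hplace
  unfold H
  linarith

lemma H_nonneg {ι : Type*} [Fintype ι] (p q : ι → ℝ) : 0 ≤ H p q :=
  Finset.sum_nonneg fun _ _ => le_max_right _ _

lemma le_H {ι : Type*} [Fintype ι] (p q : ι → ℝ) (i : ι) : max (max (p i) (q i)) 0 ≤ H p q :=
  Finset.single_le_sum (f := fun i => max (max (p i) (q i)) 0)
    (fun _ _ => le_max_right _ _) (Finset.mem_univ i)

lemma abs_le_H {ι : Type*} [Fintype ι] (p q : ι → ℝ) (i : ι) (hp : 0 ≤ ∑ j, p j) :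
    |p i| ≤ H p q := by
  rw [abs_le]
  constructor
  · have := Finset.single_le_sum (f := fun i => max (max (p i) (q i)) 0 - p i)
      (fun i _ => sub_nonneg.2 ((le_max_left _ _).trans (le_max_left _ _))) (Finset.mem_univ i)
    rw [Finset.sum_sub_distrib] at this
    have h0 : 0 ≤ max (max (p i) (q i)) 0 := le_max_right _ _
    unfold H
    linarith
  · exact ((le_max_left _ _).trans (le_max_left _ _)).trans (le_H p q i)

lemma abs_le_H' {ι : Type*} [Fintype ι] (p q : ι → ℝ) (i : ι) (hp : 0 ≤ ∑ j, q j) :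
    |q i| ≤ H p q := by
  have : H p q = H q p := by unfold H; simp only [max_comm]
  rw [this]
  exact abs_le_H q p i hp

/-- Two large log vectors in nearly the same direction, the second one much larger,
violate the key inequality. -/
lemma contra {ι : Type*} [Fintype ι] (p q p' q' : ι → ℝ) (c ε : ℝ)
    (hc : 10 * c ≤ H p q) (hpos : 0 < H p q) (hbig : 40 * H p q ≤ H p' q')
    (hε : Fintype.card ι * ε ≤ 1 / 100) (hε0 : 0 ≤ ε)
    (hp : ∀ i, p' i / H p' q' - p i / H p q ≤ ε) (hq : ∀ i, q' i / H p' q' - q i / H p q ≤ ε)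
    (hkey : ∀ n : ℕ, (n + 1 : ℝ) * H p q ≤ H (fun i => p' i - 2 * (n + 1) * p i)
      (fun i => q' i - 2 * (n + 1) * q i) + (n + 1) * c) : False := by
  set h := H p q with hh
  set h' := H p' q' with hh'
  have hpos' : 0 < h' := by linarith
  set t := h' / h with ht
  have ht40 : 40 ≤ t := by rw [ht, le_div_iff₀ hpos]; linarith
  have hth : h' = t * h := by rw [ht]; field_simp
  set N := ⌊t / 2⌋₊ with hN
  have hN1 : (N : ℝ) ≤ t / 2 := Nat.floor_le (by linarith)
  have hN2 : t / 2 < N + 1 := Nat.lt_floor_add_one _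
  have hNpos : 0 < N := by
    have : (0:ℝ) < N := by linarith
    exact_mod_cast this
  obtain ⟨n, hn⟩ : ∃ n, N = n + 1 := ⟨N - 1, by omega⟩
  have hk := hkey n
  have hNn : (N : ℝ) = n + 1 := by rw [hn]; push_cast; ring
  rw [← hNn] at hk
  have coord : ∀ a a' : ℝ, a' / h' - a / h ≤ ε → a' - 2 * N * a ≤ ε * h' + (t - 2 * N) * a := by
    intro a a' haa
    have e : a' = (a' / h') * h' := by field_simp
    have e2 : a / h * h' = t * a := by rw [ht]; field_simp
    have : a' ≤ (a / h + ε) * h' := by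
      rw [e]; gcongr
      linarith
    nlinarith
  have hH : H (fun i => p' i - 2 * N * p i) (fun i => q' i - 2 * N * q i) ≤
      ∑ i : ι, (ε * h' + (t - 2 * N) * max (max (p i) (q i)) 0) := by
    apply Finset.sum_le_sum
    intro i _
    have hm0 : 0 ≤ max (max (p i) (q i)) 0 := le_max_right _ _
    have ht0 : 0 ≤ t - 2 * N := by linarith
    refine max_le (max_le ?_ ?_) ?_
    · refine (coord _ _ (hp i)).trans ?_
      have : p i ≤ max (max (p i) (q i)) 0 := (le_max_left _ _).trans (le_max_left _ _)
      gcongr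
    · refine (coord _ _ (hq i)).trans ?_
      have : q i ≤ max (max (p i) (q i)) 0 := (le_max_right _ _).trans (le_max_left _ _)
      gcongr
    · positivity
  have hE : ∑ i : ι, (ε * h' + (t - 2 * N) * max (max (p i) (q i)) 0) =
      Fintype.card ι * (ε * h') + (t - 2 * N) * h := by
    rw [Finset.sum_add_distrib, ← Finset.mul_sum (f := fun i => max (max (p i) (q i)) 0),
      Finset.sum_const, Finset.card_univ, nsmul_eq_mul, hh, H]
  rw [hE] at hH
  have b1 : Fintype.card ι * (ε * h') ≤ 1 / 100 * h' := by
    rw [← mul_assoc]; gcongr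
  have b2 : (t - 2 * N) * h ≤ 2 * h := by
    gcongr; linarith
  have b3 : (N:ℝ) * c ≤ N * (h / 10) := by gcongr; linarith
  have b4 : h' ≤ (2 * N + 2) * h := by rw [hth]; gcongr; linarith
  have hN20 : (19:ℝ) ≤ N := by linarith
  have : (19:ℝ) * h ≤ N * h := by gcongr
  nlinarith

theorem core {K ι : Type*} [Field K] [CharZero K] [Fintype ι] (v : ι → AbsoluteValue K ℝ)
    (R : Subring K) (hprod : ∀ r ∈ R, r ≠ 0 → 1 ≤ ∏ i, v i r)
    (hfin : ∀ B : ℝ, {x : K | x ∈ R ∧ ∀ i, v i x ≤ B}.Finite) :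
    {x : K | x ≠ 0 ∧ 1 - x ≠ 0 ∧ x ∈ R ∧ x⁻¹ ∈ R ∧ (1 - x)⁻¹ ∈ R}.Finite := by
  by_contra hinf
  set U := {x : K | x ≠ 0 ∧ 1 - x ≠ 0 ∧ x ∈ R ∧ x⁻¹ ∈ R ∧ (1 - x)⁻¹ ∈ R} with hU
  set p : K → ι → ℝ := fun x i => Real.log (v i x) with hp
  set q : K → ι → ℝ := fun x i => Real.log (v i (1 - x)) with hq
  have hex : ∀ n : ℕ, ∃ x ∈ U, (n + 1 : ℝ) < H (p x) (q x) := by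
    intro n
    by_contra! hcon
    apply hinf
    refine (hfin (Real.exp (n + 1))).subset ?_
    intro x hx
    refine ⟨hx.2.2.1, fun i => ?_⟩
    have h1 : Real.log (v i x) ≤ n + 1 :=
      (((le_max_left _ _).trans (le_max_left _ _)).trans (le_H (p x) (q x) i)).trans (hcon x hx)
    exact (Real.log_le_iff_le_exp ((v i).pos hx.1)).1 h1
  choose x hxU hxH using hex
  have hpos : ∀ n, 0 < H (p (x n)) (q (x n)) := fun n => lt_trans (by positivity) (hxH n)
  have hsum : ∀ r ∈ R, r ≠ 0 → 0 ≤ ∑ i, Real.log (v i r) := by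
    intro r hr hr0
    rw [← Real.log_prod (fun i _ => ((v i).pos hr0).ne')]
    exact Real.log_nonneg (hprod _ hr hr0)
  set P : ℕ → (ι → ℝ) × (ι → ℝ) := fun n =>
    (fun i => p (x n) i / H (p (x n)) (q (x n)), fun i => q (x n) i / H (p (x n)) (q (x n))) with hP
  have hPb : ∀ n, P n ∈ Metric.closedBall (0 : (ι → ℝ) × (ι → ℝ)) 1 := by
    intro n
    rw [mem_closedBall_zero_iff, Prod.norm_def]
    obtain ⟨h0, h1, h2, h3, h4⟩ := hxU n
    refine max_le ?_ ?_ <;> rw [pi_norm_le_iff_of_nonneg zero_le_one] <;> intro i <;>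
      rw [Real.norm_eq_abs, abs_div, abs_of_pos (hpos n), div_le_one (hpos n)]
    · exact abs_le_H _ _ i (hsum _ h2 h0)
    · exact abs_le_H' _ _ i (hsum _ (R.sub_mem R.one_mem h2) h1)
  obtain ⟨a, _, φ, hφ, hlim⟩ := tendsto_subseq_of_bounded Metric.isBounded_closedBall hPb
  set d := (Fintype.card ι : ℝ) with hd
  have hd0 : 0 ≤ d := by positivity
  set ε : ℝ := 1 / (200 * (d + 1)) with hε
  have hε0 : 0 < ε := by positivity
  obtain ⟨N0, hN0⟩ := Metric.tendsto_atTop.1 hlim ε hε0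
  set c : ℝ := d * (Real.log 2 + Real.log 64) with hc
  obtain ⟨n1, hn1⟩ := exists_nat_ge (10 * c)
  set n := φ (max n1 N0) with hn
  obtain ⟨m1, hm1⟩ := exists_nat_ge (40 * H (p (x n)) (q (x n)))
  set m := φ (max m1 N0) with hm
  have hdist : dist (P m) (P n) ≤ 2 * ε := by
    have e1 := hN0 (max n1 N0) (le_max_right _ _)
    have e2 := hN0 (max m1 N0) (le_max_right _ _)
    have := dist_triangle_right (P m) (P n) a
    simp only [Function.comp] at e1 e2
    linarith
  have hnn : (n1 : ℝ) ≤ n := by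
    exact_mod_cast (le_max_left n1 N0).trans (hφ.id_le _)
  have hmm : (m1 : ℝ) ≤ m := by
    exact_mod_cast (le_max_left m1 N0).trans (hφ.id_le _)
  have hd1 : ∀ i, p (x m) i / H (p (x m)) (q (x m)) - p (x n) i / H (p (x n)) (q (x n)) ≤ 2 * ε := by
    intro i
    have e1 := (dist_le_pi_dist (P m).1 (P n).1 i).trans
      ((le_max_left _ _).trans ((Prod.dist_eq (x := P m) (y := P n)).symm.le.trans hdist))
    rw [Real.dist_eq] at e1
    exact (le_abs_self _).trans e1
  have hd2 : ∀ i, q (x m) i / H (p (x m)) (q (x m)) - q (x n) i / H (p (x n)) (q (x n)) ≤ 2 * ε := by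
    intro i
    have e1 := (dist_le_pi_dist (P m).2 (P n).2 i).trans
      ((le_max_right _ _).trans ((Prod.dist_eq (x := P m) (y := P n)).symm.le.trans hdist))
    rw [Real.dist_eq] at e1
    exact (le_abs_self _).trans e1
  refine contra (p (x n)) (q (x n)) (p (x m)) (q (x m)) c (2 * ε) ?_ (hpos n) ?_ ?_ (by positivity)
    hd1 hd2 ?_
  · have := hxH n
    linarith
  · have := hxH m
    linarith
  · rw [← hd, hε]
    rw [← mul_assoc, mul_one_div, div_le_div_iff₀ (by positivity) (by norm_num)]
    nlinarith
  · intro j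
    obtain ⟨h0, h1, h2, h3, h4⟩ := hxU n
    obtain ⟨k0, k1, k2, k3, k4⟩ := hxU m
    have := key v R hprod (x n) (x m) h0 h1 k0 k1 h2 h3 h4 k2 j
    refine this.trans ?_
    have l2 : 0 ≤ Real.log 2 := Real.log_nonneg (by norm_num)
    have : d * (Real.log 2 + (j + 1) * Real.log 64) ≤ (j + 1) * c := by
      rw [hc]
      have : 0 ≤ (j:ℝ) * d * Real.log 2 := by positivity
      nlinarith
    have h := add_le_add_right this (H (fun i => Real.log (v i (x m)) - 2 * (j + 1) * Real.log (v i (x n)))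
        (fun i => Real.log (v i (1 - (x m))) - 2 * (j + 1) * Real.log (v i (1 - (x n)))))
    exact h

end SUnit

namespace SUnit

lemma mk_le_one {k : Type*} [Field k] [NumberField k] (v : HeightOneSpectrum (𝓞 k)) (x : k) :
    FinitePlace.mk v x ≤ 1 ↔ v.valuation k x ≤ 1 := by
  rw [FinitePlace.mk_apply, FinitePlace.norm_embedding',
    ← WithZeroMulInt.toNNReal_le_one_iff (NumberField.HeightOneSpectrum.one_lt_absNorm_nnreal v)]
  norm_cast

lemma mk_eq_one {k : Type*} [Field k] [NumberField k] (v : HeightOneSpectrum (𝓞 k)) (x : k) :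
    FinitePlace.mk v x = 1 ↔ v.valuation k x = 1 := by
  rw [FinitePlace.mk_apply, FinitePlace.norm_embedding',
    ← WithZeroMulInt.toNNReal_eq_one_iff _ (NumberField.HeightOneSpectrum.absNorm_ne_zero v)
      (NumberField.HeightOneSpectrum.one_lt_absNorm_nnreal v).ne']
  norm_cast

/-- The places in `S` together with the infinite ones (with multiplicity). -/
noncomputable def places {k : Type*} [Field k] [NumberField k]
    (S : Finset (HeightOneSpectrum (𝓞 k))) :
    (Σ w : InfinitePlace k, Fin w.mult) ⊕ S → AbsoluteValue k ℝ
  | Sum.inl w => w.1.1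
  | Sum.inr s => (FinitePlace.mk s.1).1

lemma fin_le_one {k : Type*} [Field k] [NumberField k] (S : Finset (HeightOneSpectrum (𝓞 k)))
    (r : k) (hr : r ∈ ((S : Set (HeightOneSpectrum (𝓞 k))).integer k).toSubring)
    (w : FinitePlace k) (hw : w.maximalIdeal ∉ S) : w r ≤ 1 := by
  rw [← FinitePlace.mk_maximalIdeal w, mk_le_one]
  exact hr _ hw

lemma places_prod {k : Type*} [Field k] [NumberField k] (S : Finset (HeightOneSpectrum (𝓞 k)))
    (f : AbsoluteValue k ℝ → ℝ) :
    ∏ i, f (places S i) = (∏ w : InfinitePlace k, f w.1 ^ w.mult) *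
      ∏ s ∈ S, f (FinitePlace.mk s).1 := by
  rw [Fintype.prod_sum_type, Fintype.prod_sigma]
  congr 1
  · apply Finset.prod_congr rfl
    intro w _
    simp [places]
  · exact Finset.prod_coe_sort S (fun s => f (FinitePlace.mk s).1)

lemma prod_ge_one {k : Type*} [Field k] [NumberField k] (S : Finset (HeightOneSpectrum (𝓞 k)))
    (r : k) (hr : r ∈ ((S : Set (HeightOneSpectrum (𝓞 k))).integer k).toSubring) (hr0 : r ≠ 0) :
    1 ≤ ∏ i, places S i r := by
  classical
  rw [places_prod S (fun v => v r), ← prod_abs_eq_one hr0]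
  refine mul_le_mul_of_nonneg_left ?_ (Finset.prod_nonneg fun w _ => pow_nonneg (w.1.nonneg _) _)
  have hfs := FinitePlace.hasFiniteMulSupport hr0
  set T := S.image FinitePlace.mk with hT
  rw [finprod_eq_prod_of_mulSupport_subset (s := hfs.toFinset ∪ T) _ (by
    intro w hw; exact Finset.mem_coe.2 (Finset.mem_union_left _ ((Set.Finite.mem_toFinset hfs).2 hw)))]
  rw [← Finset.prod_sdiff (Finset.subset_union_right (s₁ := hfs.toFinset) (s₂ := T))]
  have h1 : ∏ w ∈ T, w r = ∏ s ∈ S, (FinitePlace.mk s).1 r := by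
    rw [hT, Finset.prod_image (fun a _ b _ h => FinitePlace.mk_eq_iff.1 h)]
    rfl
  have h2 : ∏ w ∈ (hfs.toFinset ∪ T) \ T, w r ≤ 1 := by
    apply Finset.prod_le_one
    · intro w _; exact w.1.nonneg _
    · intro w hw
      apply fin_le_one S r hr
      intro hmem
      apply (Finset.mem_sdiff.1 hw).2
      rw [hT, Finset.mem_image]
      exact ⟨_, hmem, FinitePlace.mk_maximalIdeal w⟩
  rw [h1]
  exact mul_le_of_le_one_left (Finset.prod_nonneg fun s _ => (FinitePlace.mk s).1.nonneg _) h2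

lemma northcott {k : Type*} [Field k] [NumberField k] (S : Finset (HeightOneSpectrum (𝓞 k)))
    (B : ℝ) :
    {x : k | x ∈ ((S : Set (HeightOneSpectrum (𝓞 k))).integer k).toSubring ∧
      ∀ i, places S i x ≤ B}.Finite := by
  classical
  refine (NumberField.finite_setOfPred_mulHeight₁_le k
    (∏ _i : (Σ w : InfinitePlace k, Fin w.mult) ⊕ S, max B 1)).subset ?_
  rintro x ⟨hx, hB⟩
  set T := S.image (FinitePlace.mk (K := k)) with hT
  have h1 : ∏ᶠ v : FinitePlace k, max (v x) 1 = ∏ s ∈ S, max ((FinitePlace.mk s).1 x) 1 := by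
    rw [finprod_eq_prod_of_mulSupport_subset (s := T)]
    · rw [hT, Finset.prod_image (fun a _ b _ h => FinitePlace.mk_eq_iff.1 h)]
      rfl
    · intro w hw
      by_contra hwT
      apply hw
      apply max_eq_right
      apply fin_le_one S x hx
      intro hmem
      apply hwT
      rw [hT, Finset.mem_coe, Finset.mem_image]
      exact ⟨_, hmem, FinitePlace.mk_maximalIdeal w⟩
  change Height.mulHeight₁ x ≤ _
  rw [NumberField.mulHeight₁_eq, h1]
  have h2 := places_prod S (fun v => max (v x) 1)
  refine h2.symm.le.trans ?_
  apply Finset.prod_le_prod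
  · intro i _; positivity
  · intro i _
    exact max_le_max_right _ (hB i)

lemma unit_eq_finite {k : Type*} [Field k] [NumberField k]
    (S : Finset (HeightOneSpectrum (𝓞 k))) :
    {x : k | x ≠ 0 ∧ 1 - x ≠ 0 ∧ (∀ v ∉ S, v.valuation k x = 1) ∧
      (∀ v ∉ S, v.valuation k (1 - x) = 1)}.Finite := by
  refine (core (places S) ((S : Set (HeightOneSpectrum (𝓞 k))).integer k).toSubring
    (prod_ge_one S) (northcott S)).subset ?_
  rintro x ⟨h0, h1, h2, h3⟩
  refine ⟨h0, h1, ?_, ?_, ?_⟩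
  · intro v hv
    exact (h2 v hv).le
  · intro v hv
    change v.valuation k x⁻¹ ≤ 1
    rw [map_inv₀, h2 v hv, inv_one]
  · intro v hv
    change v.valuation k (1 - x)⁻¹ ≤ 1
    rw [map_inv₀, h3 v hv, inv_one]

lemma exists_support {k : Type*} [Field k] [NumberField k] (z : k) (hz : z ≠ 0) :
    ∃ S : Finset (HeightOneSpectrum (𝓞 k)), ∀ v ∉ S, v.valuation k z = 1 := by
  classical
  have hfs := FinitePlace.hasFiniteMulSupport hz
  refine ⟨hfs.toFinset.image FinitePlace.maximalIdeal, fun v hv => ?_⟩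
  rw [← mk_eq_one]
  by_contra h
  apply hv
  rw [Finset.mem_image]
  exact ⟨FinitePlace.mk v, (Set.Finite.mem_toFinset hfs).2 h, FinitePlace.maximalIdeal_mk v⟩

end SUnit

/-- Siegel–Mahler `S`-unit equation theorem: for nonzero `a, b, c ∈ k`,
the set of pairs `(u, v) ∈ O_{k,S}^* × O_{k,S}^*` with `au + bv = c` is finite. -/
theorem stmt_18 {k : Type*} [Field k] [NumberField k]
    (S : Finset (HeightOneSpectrum (𝓞 k)))
    (a b c : k) (ha : a ≠ 0) (hb : b ≠ 0) (hc : c ≠ 0) :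
    {p : kˣ × kˣ | p.1 ∈ (S : Set (HeightOneSpectrum (𝓞 k))).unit k ∧
      p.2 ∈ (S : Set (HeightOneSpectrum (𝓞 k))).unit k ∧
      a * p.1 + b * p.2 = c}.Finite := by
  classical
  obtain ⟨S₁, hS₁⟩ := SUnit.exists_support (a / c) (div_ne_zero ha hc)
  obtain ⟨S₂, hS₂⟩ := SUnit.exists_support (b / c) (div_ne_zero hb hc)
  refine Set.Finite.of_injOn (f := fun p : kˣ × kˣ => a / c * (p.1 : k)) ?_ ?_
    (SUnit.unit_eq_finite (S ∪ (S₁ ∪ S₂)))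
  · rintro ⟨u, w⟩ ⟨hu, hw, h⟩
    simp only at hu hw h
    have e : 1 - a / c * (u : k) = b / c * (w : k) := by
      field_simp
      linear_combination -h
    simp only [Set.mem_ofPred_eq, e]
    refine ⟨mul_ne_zero (div_ne_zero ha hc) u.ne_zero, mul_ne_zero (div_ne_zero hb hc) w.ne_zero,
      ?_, ?_⟩
    · intro v hv
      simp only [Finset.mem_union, not_or] at hv
      rw [map_mul, hS₁ v hv.2.1, one_mul]
      exact hu v hv.1
    · intro v hv
      simp only [Finset.mem_union, not_or] at hv
      rw [map_mul, hS₂ v hv.2.2, one_mul]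
      exact hw v hv.1
  · rintro ⟨u, w⟩ ⟨-, -, h⟩ ⟨u', w'⟩ ⟨-, -, h'⟩ heq
    simp only at h h' heq
    have hu : (u : k) = u' := mul_left_cancel₀ (div_ne_zero ha hc) heq
    have hw : (w : k) = w' := by
      apply mul_left_cancel₀ hb
      rw [hu] at h
      linear_combination h - h'
    rw [Units.ext hu, Units.ext hw]
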